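/- arXiv:2206.06810 — 10 statements merged into one kernel-verified Lean document; each statement's English description precedes it below -/
import Mathlib

section
/- Let K ≥ 1 and T ≥ 1 be integers and let Δ_K = {p ∈ [0,1]^K : Σ_{i=1}^K p_i = 1} be the probability simplex in ℝ^K. Let ℓ̂(1),…,ℓ̂(T) ∈ ℝ^K and m(1),…,m(T) ∈ ℝ^K, and for each t = 1,…,T+1 let ψ_t : ℝ^K → ℝ be a convex differentiable function with associated Bregman divergence D_t(q,p) = ψ_t(q) − ψ_t(p) − ⟨∇ψ_t(p), q − p⟩. Suppose p(1),…,p(T) ∈ Δ_K and q(1),…,q(T+1) ∈ Δ_K satisfy the optimality conditions (which hold for minimizers of the corresponding convex objectives over Δ_K): (i) for every t ∈ {1,…,T} and every u ∈ Δ_K, ⟨m(t) + Σ_{s=1}^{t−1} ℓ̂(s), u⟩ + ψ_t(u) ≥ ⟨m(t) + Σ_{s=1}^{t−1} ℓ̂(s), p(t)⟩ + ψ_t(p(t)) + D_t(u, p(t)); and (ii) for every t ∈ {1,…,T+1} and every u ∈ Δ_K, ⟨Σ_{s=1}^{t−1} ℓ̂(s), u⟩ + ψ_t(u) ≥ ⟨Σ_{s=1}^{t−1}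 ℓ̂(s), q(t)⟩ + ψ_t(q(t)) + D_t(u, q(t)). Then for every p* ∈ Δ_K, Σ_{t=1}^T ⟨ℓ̂(t), p(t) − p*⟩ ≤ ψ_{T+1}(p*) − ψ_1(q(1)) + Σ_{t=1}^T (ψ_t(q(t+1)) − ψ_{t+1}(q(t+1))) + Σ_{t=1}^T (⟨ℓ̂(t) − m(t), p(t) − q(t+1)⟩ − D_t(q(t+1), p(t))). -/
/-!
Write `L_t = ∑_{s<t} ℓ̂(s)` and let `Φ_t = ⟨L_t, q(t)⟩ + ψ_t(q(t))` be the optimal value of the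
non-optimistic objective. Testing the optimality of `q(t)` against `p(t)`, and that of `p(t)`
against `q(t+1)`, gives (after discarding the Bregman divergence `D_t(p(t), q(t)) ≥ 0`, which is
where convexity enters)

`⟨ℓ̂(t), p(t)⟩ ≤ Φ_{t+1} - Φ_t + (ψ_t - ψ_{t+1})(q(t+1)) + ⟨ℓ̂(t) - m(t), p(t) - q(t+1)⟩
  - D_t(q(t+1), p(t))`.

Summing over `t` telescopes `Φ`. Here `Φ_0 = ψ_0(q(0))`, and the optimality of `q(T)` tested
against the comparator bounds `Φ_T` by `⟨L_T, p*⟩ + ψ_T(p*)`.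
-/

open Finset

/-- The probability simplex in `ℝ^K`:
`Δ_K = {p ∈ [0,1]^K : Σ_i p_i = 1}`. -/
def probSimplex (K : ℕ) : Set (Fin K → ℝ) :=
  {p | (∀ i, p i ∈ Set.Icc (0 : ℝ) 1) ∧ ∑ i, p i = 1}

/-- The Bregman divergence `D(q,p) = ψ(q) − ψ(p) − ⟨∇ψ(p), q − p⟩`
associated with a differentiable function `ψ : ℝ^K → ℝ`. -/
noncomputable def bregman {K : ℕ} (ψ : (Fin K → ℝ) → ℝ) (q p : Fin K → ℝ) : ℝ :=
  ψ q - ψ p - fderiv ℝ ψ p (q - p)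

/-- A differentiable convex function lies above its tangent hyperplanes. This is proved by
restricting the function to the line through the two points. -/
theorem bregman_nonneg {K : ℕ} {f : (Fin K → ℝ) → ℝ} (hf : ConvexOn ℝ Set.univ f)
    (hd : Differentiable ℝ f) (x y : Fin K → ℝ) : 0 ≤ bregman f y x := by
  have hc : ConvexOn ℝ Set.univ (f ∘ AffineMap.lineMap (k := ℝ) x y) := by
    simpa using hf.comp_affineMap (AffineMap.lineMap (k := ℝ) x y)
  have hder : HasDerivAt (f ∘ AffineMap.lineMap (k := ℝ) x y) (fderiv ℝ f x (y - x)) 0 := by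
    have h1 : HasFDerivAt f (fderiv ℝ f x) (AffineMap.lineMap (k := ℝ) x y (0 : ℝ)) := by
      simpa using (hd x).hasFDerivAt
    exact h1.comp_hasDerivAt (0 : ℝ) AffineMap.hasDerivAt_lineMap
  have h := hc.le_slope_of_hasDerivAt (Set.mem_univ (0 : ℝ)) (Set.mem_univ 1) one_pos hder
  simp only [slope_def_field, Function.comp_apply, AffineMap.lineMap_apply_one,
    AffineMap.lineMap_apply_zero, sub_zero, div_one] at h
  unfold bregman
  linarith

/-- Standard OFTRL regret decomposition (Lemma 1).  Rounds are `0`-based: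
`t ∈ {0,…,T−1}` corresponds to rounds `1,…,T` of the paper, and the
regularizers `ψ_1,…,ψ_{T+1}` are `ψ 0,…,ψ T`; likewise `q 0,…,q T` are
`q(1),…,q(T+1)`.  The hypotheses `hPopt` and `hQopt` are the first-order
optimality conditions satisfied by the OFTRL minimizers
`p(t) ∈ argmin_{p ∈ Δ_K} {⟨m(t) + Σ_{s<t} ℓ̂(s), p⟩ + ψ_t(p)}` and
`q(t) ∈ argmin_{p ∈ Δ_K} {⟨Σ_{s<t} ℓ̂(s), p⟩ + ψ_t(p)}`.  The conclusion
bounds `Σ_t ⟨ℓ̂(t), p(t) − p*⟩` by the penalty terms plus the stability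
terms. -/
theorem stmt_0 (K T : ℕ) (hK : 1 ≤ K) (hT : 1 ≤ T)
    (lhat m : ℕ → Fin K → ℝ)
    (ψ : ℕ → (Fin K → ℝ) → ℝ)
    (hψconv : ∀ t, ConvexOn ℝ Set.univ (ψ t))
    (hψdiff : ∀ t, Differentiable ℝ (ψ t))
    (p q : ℕ → Fin K → ℝ)
    (hp : ∀ t ∈ Finset.range T, p t ∈ probSimplex K)
    (hq : ∀ t ∈ Finset.range (T + 1), q t ∈ probSimplex K)
    (hPopt : ∀ t ∈ Finset.range T, ∀ u ∈ probSimplex K,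
        (∑ i, (m t i + ∑ s ∈ Finset.range t, lhat s i) * (p t) i) + ψ t (p t)
            + bregman (ψ t) u (p t)
          ≤ (∑ i, (m t i + ∑ s ∈ Finset.range t, lhat s i) * u i) + ψ t u)
    (hQopt : ∀ t ∈ Finset.range (T + 1), ∀ u ∈ probSimplex K,
        (∑ i, (∑ s ∈ Finset.range t, lhat s i) * (q t) i) + ψ t (q t)
            + bregman (ψ t) u (q t)
          ≤ (∑ i, (∑ s ∈ Finset.range t, lhat s i) * u i) + ψ t u)
    (pstar : Fin K → ℝ) (hpstar : pstar ∈ probSimplex K) :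
    ∑ t ∈ Finset.range T, ∑ i, lhat t i * (p t i - pstar i)
      ≤ ψ T pstar - ψ 0 (q 0)
        + ∑ t ∈ Finset.range T, (ψ t (q (t + 1)) - ψ (t + 1) (q (t + 1)))
        + ∑ t ∈ Finset.range T,
            ((∑ i, (lhat t i - m t i) * (p t i - q (t + 1) i))
              - bregman (ψ t) (q (t + 1)) (p t)) := by
  set Φ : ℕ → ℝ := fun t =>
    (∑ i, (∑ s ∈ Finset.range t, lhat s i) * (q t) i) + ψ t (q t) with hΦ
  have step : ∀ t ∈ Finset.range T, ∑ i, lhat t i * p t i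
      ≤ (Φ (t + 1) - Φ t) + (ψ t (q (t + 1)) - ψ (t + 1) (q (t + 1)))
        + ((∑ i, (lhat t i - m t i) * (p t i - q (t + 1) i))
              - bregman (ψ t) (q (t + 1)) (p t)) := by
    intro t ht
    have htT := Finset.mem_range.mp ht
    have hP := hPopt t ht (q (t + 1)) (hq _ (Finset.mem_range.mpr (by omega)))
    have hQ := hQopt t (Finset.mem_range.mpr (by omega)) (p t) (hp t ht)
    have hD := bregman_nonneg (hψconv t) (hψdiff t) (q t) (p t)
    simp only [hΦ, Finset.sum_range_succ, add_mul, sub_mul, mul_sub, Finset.sum_add_distrib,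
      Finset.sum_sub_distrib] at hP hQ ⊢
    linarith
  have hsum := Finset.sum_le_sum step
  rw [Finset.sum_add_distrib, Finset.sum_add_distrib, Finset.sum_range_sub] at hsum
  have hΦ0 : Φ 0 = ψ 0 (q 0) := by simp [hΦ]
  have hΦT : Φ T ≤ (∑ t ∈ Finset.range T, ∑ i, lhat t i * pstar i) + ψ T pstar := by
    have hQ := hQopt T (Finset.self_mem_range_succ T) pstar hpstar
    have hD := bregman_nonneg (hψconv T) (hψdiff T) (q T) pstar
    have hswap : ∑ t ∈ Finset.range T, ∑ i, lhat t i * pstar i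
        = ∑ i, (∑ s ∈ Finset.range T, lhat s i) * pstar i := by
      rw [Finset.sum_comm]
      simp only [Finset.sum_mul]
    rw [hswap]
    simp only [hΦ]
    linarith
  have hlhs : ∑ t ∈ Finset.range T, ∑ i, lhat t i * (p t i - pstar i)
      = ∑ t ∈ Finset.range T, ∑ i, lhat t i * p t i
        - ∑ t ∈ Finset.range T, ∑ i, lhat t i * pstar i := by
    simp only [mul_sub, Finset.sum_sub_distrib]
  linarith
end

section
/- Let T ≥ 1 and K ≥ 1 be integers, let ℓ(t) ∈ [0,1]^K for t = 1,…,T be loss vectors, let I(t) ∈ {1,…,K} for t = 1,…,T be chosen arms, let γ > 0, and let p_i(t) ∈ (0,1] for all i and t. Define N_i(t) = #{s ≤ t : I(s) = i}, m_i(t) = (1/(1 + N_i(t−1)))·(1/2 + Σ_{s=1}^{t−1} 1[I(s)=i] ℓ_i(s)), and α_i(t) = 1[I(t)=i]·(ℓ_i(t) − m_i(t))²·min{1, 2(1 − p_i(t))/(p_i(t)² γ)}. Then for every i ∈ {1,…,K} and every m_i* ∈ [0,1]: Σ_{t=1}^T α_i(t) ≤ Σ_{t=1}^T 1[I(t)=i]·(ℓ_i(t)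 − m_i(t))² ≤ Σ_{t=1}^T 1[I(t)=i]·(ℓ_i(t) − m_i*)² + log(1 + N_i(T)) + 5/4. -/
/-!
The first inequality holds because the factor `min 1 _` in `α_i` is at most `1`.

For the second one, write `k = 1 + N_i` and `m = m_i` before a pull of arm `i` with loss `x`; after
the pull the prediction is `m' = (k m + x) / (k + 1)`. A direct computation gives, for every `c`,
`(x - m)² + (k + 1) (m' - c)² = (x - c)² + k (m - c)² + (x - m)² / (k + 1)`,
so `k (m - c)²` is a potential whose telescoping leaves only the stability terms
`(x - m)² / (k + 1) ≤ 1 / (k + 1) ≤ log (k + 1) - log k`. These sum to at most `log (1 + N_i(T))`,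
and the initial potential is `(1/2 - c)² ≤ 1/4`.
-/

open Finset

/-- Number of rounds `s < t` (i.e. rounds `1,…,t` in `1`-based indexing)
on which arm `i` was chosen. -/
def pullCount {K : ℕ} (I : ℕ → Fin K) (i : Fin K) (t : ℕ) : ℕ :=
  ((Finset.range t).filter fun s => I s = i).card

/-- The optimistic prediction `m_i(t)`: the empirical mean of the losses
observed for arm `i` before round `t`, initialized with the
pseudo-observation `1/2` (rounds are `0`-based, so round `t` here is round
`t+1` of the paper and the count used is `N_i(t−1)` of the paper). -/
noncomputable def mPred {K : ℕ} (ℓ : ℕ → Fin K → ℝ) (I : ℕ → Fin K)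
    (i : Fin K) (t : ℕ) : ℝ :=
  (1 / (1 + (pullCount I i t : ℝ)))
    * (1 / 2 + ∑ s ∈ Finset.range t, if I s = i then ℓ s i else 0)

/-- The per-round learning-rate increment
`α_i(t) = 1[I(t)=i]·(ℓ_i(t) − m_i(t))²·min{1, 2(1 − p_i(t))/(p_i(t)²γ)}`. -/
noncomputable def alphaInc {K : ℕ} (ℓ : ℕ → Fin K → ℝ) (I : ℕ → Fin K)
    (p : Fin K → ℕ → ℝ) (γ : ℝ) (i : Fin K) (t : ℕ) : ℝ :=
  (if I t = i then 1 else 0) * (ℓ t i - mPred ℓ I i t) ^ 2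
    * min 1 (2 * (1 - p i t) / (p i t ^ 2 * γ))

lemma pullCount_succ {K : ℕ} (I : ℕ → Fin K) (i : Fin K) (t : ℕ) :
    pullCount I i (t + 1) = pullCount I i t + if I t = i then 1 else 0 := by
  unfold pullCount
  rw [Finset.range_add_one, Finset.filter_insert]
  split_ifs <;> simp

/-- The defining equation of the prediction, with the denominator cleared. -/
lemma mul_mPred {K : ℕ} (ℓ : ℕ → Fin K → ℝ) (I : ℕ → Fin K) (i : Fin K) (t : ℕ) :
    (1 + (pullCount I i t : ℝ)) * mPred ℓ I i t
      = 1 / 2 + ∑ s ∈ Finset.range t, if I s = i then ℓ s i else 0 := by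
  have h : (0 : ℝ) < 1 + (pullCount I i t : ℝ) := by positivity
  unfold mPred
  field_simp

lemma mPred_mem_Icc {K : ℕ} (ℓ : ℕ → Fin K → ℝ) (I : ℕ → Fin K) (i : Fin K) (t : ℕ)
    (hℓ : ∀ s ∈ Finset.range t, ℓ s i ∈ Set.Icc (0 : ℝ) 1) :
    mPred ℓ I i t ∈ Set.Icc (0 : ℝ) 1 := by
  have hk : (0 : ℝ) < 1 + (pullCount I i t : ℝ) := by positivity
  have h := mul_mPred ℓ I i t
  have h0 : 0 ≤ ∑ s ∈ Finset.range t, if I s = i then ℓ s i else 0 := by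
    refine Finset.sum_nonneg fun s hs => ?_
    split_ifs
    exacts [(hℓ s hs).1, le_rfl]
  have h1 : (∑ s ∈ Finset.range t, if I s = i then ℓ s i else 0) ≤ (pullCount I i t : ℝ) := by
    have hc : (pullCount I i t : ℝ) = ∑ s ∈ Finset.range t, if I s = i then (1 : ℝ) else 0 := by
      simp [pullCount]
    rw [hc]
    refine Finset.sum_le_sum fun s hs => ?_
    split_ifs
    exacts [(hℓ s hs).2, le_rfl]
  constructor <;> by_contra! hlt <;> nlinarith

/-- One pull: the potential `k (m - c)²` pays for the excess squared error up to the increment of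
`log k`. -/
lemma potential_step {k m m' x c : ℝ} (hk : 0 < k) (hm' : (k + 1) * m' = k * m + x)
    (hd : (x - m) ^ 2 ≤ 1) :
    (x - m) ^ 2 + (k + 1) * (m' - c) ^ 2 + Real.log k
      ≤ (x - c) ^ 2 + k * (m - c) ^ 2 + Real.log (k + 1) := by
  have hlog : 1 / (k + 1) ≤ Real.log (k + 1) - Real.log k := by
    rw [← Real.log_div (by positivity) hk.ne']
    have h := Real.one_sub_inv_le_log_of_pos (x := (k + 1) / k) (by positivity)
    have e : 1 - ((k + 1) / k)⁻¹ = 1 / (k + 1) := by field_simp; ring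
    rwa [e] at h
  have hdk : (x - m) ^ 2 / (k + 1) ≤ 1 / (k + 1) := by gcongr
  have hm : m' = (k * m + x) / (k + 1) := by
    rw [eq_div_iff (by positivity)]; linarith
  have key : (x - m) ^ 2 + (k + 1) * (m' - c) ^ 2
      = (x - c) ^ 2 + k * (m - c) ^ 2 + (x - m) ^ 2 / (k + 1) := by
    rw [hm]; field_simp; ring
  linarith

/-- The telescoped regret bound, with the final potential kept on the left. -/
lemma sum_sq_add_potential_le {K : ℕ} (ℓ : ℕ → Fin K → ℝ) (I : ℕ → Fin K) (i : Fin K) (c : ℝ)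
    (t : ℕ) (hℓ : ∀ s ∈ Finset.range t, ℓ s i ∈ Set.Icc (0 : ℝ) 1) :
    ∑ s ∈ Finset.range t, (if I s = i then 1 else 0) * (ℓ s i - mPred ℓ I i s) ^ 2
        + (1 + (pullCount I i t : ℝ)) * (mPred ℓ I i t - c) ^ 2
      ≤ ∑ s ∈ Finset.range t, (if I s = i then 1 else 0) * (ℓ s i - c) ^ 2
        + (1 / 2 - c) ^ 2 + Real.log (1 + (pullCount I i t : ℝ)) := by
  induction t with
  | zero => simp [pullCount, mPred]
  | succ t ih =>
    have hℓt : ∀ s ∈ Finset.range t, ℓ s i ∈ Set.Icc (0 : ℝ) 1 := fun s hs =>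
      hℓ s (Finset.mem_range.2 ((Finset.mem_range.1 hs).trans (Nat.lt_succ_self t)))
    have ih := ih hℓt
    have hm := mPred_mem_Icc ℓ I i t hℓt
    have hx := hℓ t (Finset.self_mem_range_succ t)
    have e := mul_mPred ℓ I i t
    have e' := mul_mPred ℓ I i (t + 1)
    rw [Finset.sum_range_succ, pullCount_succ] at e'
    rw [Finset.sum_range_succ, Finset.sum_range_succ, pullCount_succ]
    have hk : (0 : ℝ) < 1 + (pullCount I i t : ℝ) := by positivity
    by_cases h : I t = i
    · simp only [h, if_true, Nat.cast_add, Nat.cast_one, one_mul, ← add_assoc] at e' ⊢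
      have hd : (ℓ t i - mPred ℓ I i t) ^ 2 ≤ 1 := by
        rw [sq_le_one_iff_abs_le_one, abs_le]
        constructor <;> linarith [hx.1, hx.2, hm.1, hm.2]
      have := potential_step (c := c) hk (e'.trans (by rw [e])) hd
      linarith
    · simp only [h, if_false, add_zero, zero_mul] at e' ⊢
      have hmm : mPred ℓ I i (t + 1) = mPred ℓ I i t :=
        mul_left_cancel₀ hk.ne' (e'.trans e.symm)
      rwa [hmm]

/-- For loss vectors `ℓ(t) ∈ [0,1]^K`, chosen arms `I(t)`, `γ > 0` and
probabilities `p_i(t) ∈ (0,1]`, for every arm `i` and every `m_i* ∈ [0,1]`: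
`Σ_t α_i(t) ≤ Σ_t 1[I(t)=i]·(ℓ_i(t) − m_i(t))²
  ≤ Σ_t 1[I(t)=i]·(ℓ_i(t) − m_i*)² + log(1 + N_i(T)) + 5/4`. -/
theorem stmt_1 (T K : ℕ) (hT : 1 ≤ T) (hK : 1 ≤ K)
    (ℓ : ℕ → Fin K → ℝ)
    (hℓ : ∀ t ∈ Finset.range T, ∀ i : Fin K, ℓ t i ∈ Set.Icc (0 : ℝ) 1)
    (I : ℕ → Fin K) (γ : ℝ) (hγ : 0 < γ)
    (p : Fin K → ℕ → ℝ)
    (hp : ∀ i : Fin K, ∀ t ∈ Finset.range T, p i t ∈ Set.Ioc (0 : ℝ) 1)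
    (i : Fin K) (mstar : ℝ) (hm : mstar ∈ Set.Icc (0 : ℝ) 1) :
    ∑ t ∈ Finset.range T, alphaInc ℓ I p γ i t
        ≤ ∑ t ∈ Finset.range T,
            (if I t = i then 1 else 0) * (ℓ t i - mPred ℓ I i t) ^ 2
      ∧ ∑ t ∈ Finset.range T,
            (if I t = i then 1 else 0) * (ℓ t i - mPred ℓ I i t) ^ 2
        ≤ (∑ t ∈ Finset.range T,
              (if I t = i then 1 else 0) * (ℓ t i - mstar) ^ 2)
            + Real.log (1 + (pullCount I i T : ℝ)) + 5 / 4 := by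
  constructor
  · refine Finset.sum_le_sum fun t _ => ?_
    unfold alphaInc
    refine mul_le_of_le_one_right ?_ (min_le_left _ _)
    split_ifs <;> positivity
  · have h := sum_sq_add_potential_le ℓ I i mstar T fun s hs => hℓ s hs i
    have hpot : 0 ≤ (1 + (pullCount I i T : ℝ)) * (mPred ℓ I i T - mstar) ^ 2 := by positivity
    have hinit : (1 / 2 - mstar) ^ 2 ≤ 1 / 4 := by nlinarith [hm.1, hm.2]
    linarith
end

section
/- Let D⁽²⁾ be the Bregman divergence associated with φ⁽²⁾(x) = (1 − x) log(1 − x) on (−∞,1), i.e., D⁽²⁾(y,x) = (1−y)log(1−y) − (1−x)log(1−x) + (log(1−x) + 1)(y − x) for x, y < 1, and let h(x) = exp(x) − x − 1. Then for any x ∈ (0,1) and any real a, the supremum over y ∈ (−∞,1) of a(x − y) − D⁽²⁾(y,x) equals (1 − x)·h(a) = (1 − x)(exp(a) − a − 1), and it is attained at y* = 1 − exp(a)(1 − x). -/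
/-- Let `D⁽²⁾(y,x) = (1−y)log(1−y) − (1−x)log(1−x) + (log(1−x)+1)(y−x)` be the
Bregman divergence of `φ⁽²⁾(x) = (1−x)log(1−x)` on `(−∞,1)`, and
`h(x) = exp x − x − 1`. For any `x ∈ (0,1)` and any real `a`, the supremum
over `y ∈ (−∞,1)` of `a(x − y) − D⁽²⁾(y,x)` equals
`(1−x)·h(a) = (1−x)(exp a − a − 1)`, attained at `y* = 1 − exp(a)(1−x)`. -/
theorem stmt_3 (x a : ℝ) (hx : x ∈ Set.Ioo (0 : ℝ) 1) :
    (∀ y : ℝ, y < 1 →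
        a * (x - y)
            - ((1 - y) * Real.log (1 - y) - (1 - x) * Real.log (1 - x)
                + (Real.log (1 - x) + 1) * (y - x)) ≤
          (1 - x) * (Real.exp a - a - 1))
    ∧ 1 - Real.exp a * (1 - x) < 1
    ∧ a * (x - (1 - Real.exp a * (1 - x)))
        - ((1 - (1 - Real.exp a * (1 - x))) * Real.log (1 - (1 - Real.exp a * (1 - x)))
            - (1 - x) * Real.log (1 - x)
            + (Real.log (1 - x) + 1) * ((1 - Real.exp a * (1 - x)) - x))
      = (1 - x) * (Real.exp a - a - 1) := by
  have hu : 0 < 1 - x := sub_pos.mpr hx.2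
  refine ⟨fun y hy => ?_, ?_, ?_⟩
  · have hv : 0 < 1 - y := sub_pos.mpr hy
    -- `t + 1 ≤ exp t` at `t = a + log (1 - x) - log (1 - y)`, where `(1 - y) * exp t`
    -- collapses to `exp a * (1 - x)`; equality `t = 0` is exactly `y = y*`.
    have key := mul_le_mul_of_nonneg_left
      (Real.add_one_le_exp (a + Real.log (1 - x) - Real.log (1 - y))) hv.le
    rw [Real.exp_sub, Real.exp_add, Real.exp_log hu, Real.exp_log hv,
      mul_div_cancel₀ _ hv.ne'] at key
    linarith
  · have := mul_pos (Real.exp_pos a) hu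
    linarith
  · rw [sub_sub_cancel, Real.log_mul (Real.exp_pos a).ne' hu.ne', Real.log_exp]
    ring
end

section
/- Let T ≥ 1 be an integer, let ℓ(1),…,ℓ(T) ∈ [0,1], and define m(t) = (1/t)·(1/2 + Σ_{s=1}^{t−1} ℓ(s)) for t = 1,…,T. Then for every m* ∈ [0,1]: Σ_{t=1}^T ((ℓ(t) − m(t))² − (ℓ(t) − m*)²) ≤ 5/4 + log T. -/
/-!
The prediction `m t` minimises the quadratic potential
`(1/2 - x)² + ∑_{s<t} (ℓ s - x)²`, whose curvature is `t + 1`. Comparing the potential at its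
minimiser and at `m*` shows that the regret after `n` rounds plus the slack
`(n + 1) (m n - m*)²` grows in round `n` by exactly `(ℓ n - m n)² / (n + 2)`, which is at most
`1 / (n + 2) ≤ log (n + 2) - log (n + 1)`. Telescoping from the initial slack
`(1/2 - m*)² ≤ 1/4` bounds the regret by `1/4 + log (T + 1)` (`regret_add_slack_le`), and
`log (T + 1) ≤ log (2 T) ≤ 1 + log T`.
-/

/-- The increment of the logarithm pays for the excess loss of one round. -/
lemma inv_le_log_sub (n : ℕ) :
    1 / ((n : ℝ) + 2) ≤ Real.log ((n : ℝ) + 2) - Real.log ((n : ℝ) + 1) := by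
  have h1 : (0 : ℝ) < (n : ℝ) + 1 := by positivity
  have h2 : (0 : ℝ) < (n : ℝ) + 2 := by positivity
  have h := Real.log_le_sub_one_of_pos (div_pos h1 h2)
  rw [Real.log_div h1.ne' h2.ne'] at h
  have e : ((n : ℝ) + 1) / (n + 2) - 1 = -(1 / ((n : ℝ) + 2)) := by
    field_simp
    ring
  linarith

/-- The regret bound strengthened by the slack term `(n + 1) (m n - m*)²`, written here as
`(1/2 + S n - (n + 1) m*)² / (n + 1)` with `S n` the sum of the first `n` losses; the slack makes
the induction on the number of rounds go through. -/
lemma regret_add_slack_le (ℓ : ℕ → ℝ) (mstar : ℝ) (hm : mstar ∈ Set.Icc (0 : ℝ) 1) (n : ℕ)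
    (hℓ : ∀ t ∈ Finset.range n, ℓ t ∈ Set.Icc (0 : ℝ) 1) :
    ∑ t ∈ Finset.range n,
        ((ℓ t - (1 / ((t : ℝ) + 1)) * (1 / 2 + ∑ s ∈ Finset.range t, ℓ s)) ^ 2
          - (ℓ t - mstar) ^ 2)
      + (1 / 2 + ∑ s ∈ Finset.range n, ℓ s - ((n : ℝ) + 1) * mstar) ^ 2 / ((n : ℝ) + 1)
      ≤ 1 / 4 + Real.log ((n : ℝ) + 1) := by
  induction n with
  | zero =>
    obtain ⟨h0, h1⟩ := hm
    simp
    nlinarith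
  | succ n ih =>
    have hprev : ∀ t ∈ Finset.range n, ℓ t ∈ Set.Icc (0 : ℝ) 1 := fun t ht =>
      hℓ t (Finset.mem_range.2 ((Finset.mem_range.1 ht).trans n.lt_succ_self))
    have ih := ih hprev
    obtain ⟨hl0, hl1⟩ := hℓ n (Finset.self_mem_range_succ n)
    have hS0 : 0 ≤ ∑ s ∈ Finset.range n, ℓ s := Finset.sum_nonneg fun t ht => (hprev t ht).1
    have hS1 : ∑ s ∈ Finset.range n, ℓ s ≤ n := by
      simpa using Finset.sum_le_card_nsmul (Finset.range n) ℓ 1 fun t ht => (hprev t ht).2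
    rw [Finset.sum_range_succ, Finset.sum_range_succ ℓ n]
    push_cast
    generalize ∑ s ∈ Finset.range n, ℓ s = S at *
    have hlog := inv_le_log_sub n
    have hN : (0 : ℝ) < (n : ℝ) + 1 := by positivity
    have hN2 : (0 : ℝ) < (n : ℝ) + 2 := by positivity
    have e2 : (n : ℝ) + 1 + 1 = n + 2 := by ring
    rw [e2]
    have hm0 : 0 ≤ (1 / ((n : ℝ) + 1)) * (1 / 2 + S) := by positivity
    have hm1 : (1 / ((n : ℝ) + 1)) * (1 / 2 + S) ≤ 1 := by
      rw [one_div_mul_eq_div, div_le_one hN]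
      linarith
    have hsq : (ℓ n - (1 / ((n : ℝ) + 1)) * (1 / 2 + S)) ^ 2 / ((n : ℝ) + 2)
        ≤ 1 / ((n : ℝ) + 2) := by
      gcongr
      rw [sq_le_one_iff_abs_le_one, abs_le]
      constructor <;> linarith
    have key : (ℓ n - (1 / ((n : ℝ) + 1)) * (1 / 2 + S)) ^ 2 - (ℓ n - mstar) ^ 2
        + (1 / 2 + (S + ℓ n) - ((n : ℝ) + 2) * mstar) ^ 2 / ((n : ℝ) + 2)
        = (1 / 2 + S - ((n : ℝ) + 1) * mstar) ^ 2 / ((n : ℝ) + 1)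
          + (ℓ n - (1 / ((n : ℝ) + 1)) * (1 / 2 + S)) ^ 2 / ((n : ℝ) + 2) := by
      field_simp
      ring
    linarith


/-- Let `T ≥ 1` be an integer, `ℓ(1),…,ℓ(T) ∈ [0,1]` (indexed here by
`t ∈ {0,…,T−1}`), and `m(t) = (1/t)·(1/2 + Σ_{s=1}^{t−1} ℓ(s))`, i.e. with
`0`-based indexing `m t = (1/(t+1))·(1/2 + Σ_{s<t} ℓ s)`. Then for every
`m* ∈ [0,1]`:
`Σ_{t} ((ℓ(t) − m(t))² − (ℓ(t) − m*)²) ≤ 5/4 + log T`. -/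
theorem stmt_4 (T : ℕ) (hT : 1 ≤ T) (ℓ : ℕ → ℝ)
    (hℓ : ∀ t ∈ Finset.range T, ℓ t ∈ Set.Icc (0 : ℝ) 1)
    (mstar : ℝ) (hm : mstar ∈ Set.Icc (0 : ℝ) 1) :
    ∑ t ∈ Finset.range T,
        ((ℓ t - (1 / ((t : ℝ) + 1)) * (1 / 2 + ∑ s ∈ Finset.range t, ℓ s)) ^ 2
          - (ℓ t - mstar) ^ 2)
      ≤ 5 / 4 + Real.log T := by
  have hT1 : (1 : ℝ) ≤ T := by exact_mod_cast hT
  have hT0 : (0 : ℝ) < T := by linarith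
  have h := regret_add_slack_le ℓ mstar hm T hℓ
  have hslack : 0 ≤ (1 / 2 + ∑ s ∈ Finset.range T, ℓ s - ((T : ℝ) + 1) * mstar) ^ 2
      / ((T : ℝ) + 1) := by positivity
  have hlog : Real.log ((T : ℝ) + 1) ≤ Real.log (2 * T) :=
    Real.log_le_log (by positivity) (by linarith)
  rw [Real.log_mul two_ne_zero hT0.ne'] at hlog
  have h2 : Real.log 2 ≤ 2 - 1 := Real.log_le_sub_one_of_pos two_pos
  linarith
end

section
/- Let μ*, μ, σ² be real numbers with 0 < μ* < μ ≤ 1 and σ² > 0, set Δ = μ − μ*, M₁ = 1 − μ, M₂ = (1 − μ)² + σ², and ν = μ(μ* − μ)/(μ*(μμ* − μ² − σ²)). Then ((1−M₁)²/(1 − 2M₁ + M₂))·log(1 − ((M₁ − M₂)/(1 − M₁) − (1 − μ*))·ν) + ((M₂ − M₁²)/(1 − 2M₁ + M₂))·log(1 − μ*·ν) = (μ²/(σ² + μ²))·log(μ/μ*) + (σ²/(σ² + μ²))·log(σ²/(σ² + μΔ)). In particular, 1 − 2M₁ + M₂ = σ² + μ² > 0, M₂ − M₁² = σ², the argument of the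 first logarithm equals μ/μ* > 0, and the argument of the second logarithm equals σ²/(σ² + μΔ) > 0. -/
/-!
With `D = σ² + μΔ > 0`, the parameter is `ν = μΔ / (μ* D)`, and the coefficient
`(M₁ - M₂) / (1 - M₁) - (1 - μ*)` of `ν` in the first logarithm is `-D / μ`.  Hence the two
arguments are `1 + Δ / μ* = μ / μ*` and `1 - μΔ / D = σ² / D`, and the identity follows
by substitution.
-/

/-- Let `0 < μ* < μ ≤ 1` and `σ² > 0`, and set `Δ = μ − μ*`, `M₁ = 1 − μ`,
`M₂ = (1 − μ)² + σ²`, `ν = μ(μ* − μ)/(μ*(μμ* − μ² − σ²))`.  Then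
`((1−M₁)²/(1−2M₁+M₂))·log(1 − ((M₁−M₂)/(1−M₁) − (1−μ*))·ν)
 + ((M₂−M₁²)/(1−2M₁+M₂))·log(1 − μ*·ν)
 = (μ²/(σ²+μ²))·log(μ/μ*) + (σ²/(σ²+μ²))·log(σ²/(σ²+μΔ))`.
In particular `1 − 2M₁ + M₂ = σ² + μ² > 0`, `M₂ − M₁² = σ²`, the argument of
the first logarithm equals `μ/μ* > 0`, and the argument of the second
logarithm equals `σ²/(σ² + μΔ) > 0`. -/
theorem stmt_7 (μstar μ σsq : ℝ) (h1 : 0 < μstar) (h2 : μstar < μ)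
    (h3 : μ ≤ 1) (hσ : 0 < σsq) :
    let Δ : ℝ := μ - μstar
    let M₁ : ℝ := 1 - μ
    let M₂ : ℝ := (1 - μ) ^ 2 + σsq
    let ν : ℝ := μ * (μstar - μ) / (μstar * (μ * μstar - μ ^ 2 - σsq))
    (((1 - M₁) ^ 2 / (1 - 2 * M₁ + M₂))
          * Real.log (1 - ((M₁ - M₂) / (1 - M₁) - (1 - μstar)) * ν)
        + ((M₂ - M₁ ^ 2) / (1 - 2 * M₁ + M₂)) * Real.log (1 - μstar * ν)
      = (μ ^ 2 / (σsq + μ ^ 2)) * Real.log (μ / μstar)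
        + (σsq / (σsq + μ ^ 2)) * Real.log (σsq / (σsq + μ * Δ)))
    ∧ 1 - 2 * M₁ + M₂ = σsq + μ ^ 2
    ∧ 0 < σsq + μ ^ 2
    ∧ M₂ - M₁ ^ 2 = σsq
    ∧ 1 - ((M₁ - M₂) / (1 - M₁) - (1 - μstar)) * ν = μ / μstar
    ∧ 0 < μ / μstar
    ∧ 1 - μstar * ν = σsq / (σsq + μ * Δ)
    ∧ 0 < σsq / (σsq + μ * Δ) := by
  intro Δ M₁ M₂ ν
  have hμ : 0 < μ := h1.trans h2
  have hΔ : 0 < μ - μstar := sub_pos.mpr h2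
  have hD : 0 < σsq + μ * (μ - μstar) := by positivity
  -- The denominator of `ν` is `-μstar * (σsq + μ * Δ)`, so the signs cancel.
  have hν : ν = μ * (μ - μstar) / (μstar * (σsq + μ * (μ - μstar))) := by
    have e : μ * μstar - μ ^ 2 - σsq = -(σsq + μ * (μ - μstar)) := by ring
    simp only [ν]
    rw [e, ← neg_sub μ μstar, mul_neg, mul_neg, neg_div_neg_eq]
  have hden : 1 - 2 * M₁ + M₂ = σsq + μ ^ 2 := by simp only [M₁, M₂]; ring
  have hvar : M₂ - M₁ ^ 2 = σsq := by simp only [M₁, M₂]; ring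
  have hmean : 1 - M₁ = μ := by simp only [M₁]; ring
  have hcoef : (M₁ - M₂) / (1 - M₁) - (1 - μstar)
      = -((σsq + μ * (μ - μstar)) / μ) := by
    rw [hmean]
    simp only [M₁, M₂]
    field_simp
    ring
  have harg₁ : 1 - ((M₁ - M₂) / (1 - M₁) - (1 - μstar)) * ν = μ / μstar := by
    rw [hcoef, hν]
    field_simp
    ring
  have harg₂ : 1 - μstar * ν = σsq / (σsq + μ * Δ) := by
    rw [hν]
    simp only [Δ]
    field_simp
    ring
  refine ⟨?_, hden, by positivity, hvar, harg₁, by positivity, harg₂, div_pos hσ hD⟩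
  rw [harg₁, harg₂, hden, hvar, hmean]
end

section
/- Let ε ∈ (0, 1/2], β₀ = 1 + ε, and δ = (1+ε)³·log((1+ε)/ε) − (1+ε)² − (1+ε)/2. Then for every real x with x ≥ −1/β₀: x − log(1 + x) ≤ x²/2 + δ·|x|³. -/
/-! For `|t| < 1` the logarithmic series gives `-log (1 - t) - t - t²/2 = ∑ tⁿ⁺³/(n+3)`.
After division by `t³` every term is increasing in `t ≥ 0`, so for `x = -t ≤ 0` the best cubic
coefficient on `[-1/β₀, 0]`, `β₀ = 1 + ε`, is the value at the endpoint `t = 1/β₀`, which is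
exactly `δ`. The same series shows `δ ≥ 0`, so for `x ≥ 0` it is enough that
`x - log (1 + x) ≤ x²/2`; this follows from `2x/(x+2) ≤ log (1 + x)`. -/

/-- The tail of the logarithmic series after its first two terms. -/
lemma hasSum_log_tail {t : ℝ} (h0 : 0 ≤ t) (h1 : t < 1) :
    HasSum (fun n : ℕ => t ^ (n + 3) / ((n : ℝ) + 3)) (-Real.log (1 - t) - t - t ^ 2 / 2) := by
  have h := (hasSum_nat_add_iff' 2).mpr
    (Real.hasSum_pow_div_log_of_abs_lt_one (abs_lt.mpr ⟨by linarith, h1⟩))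
  have hsum : -Real.log (1 - t) - ∑ i ∈ Finset.range 2, t ^ (i + 1) / ((i : ℝ) + 1)
      = -Real.log (1 - t) - t - t ^ 2 / 2 := by
    norm_num [Finset.sum_range_succ]
    ring
  rw [hsum] at h
  have hterm : (fun n : ℕ => t ^ (n + 3) / ((n : ℝ) + 3))
      = fun n : ℕ => t ^ (n + 2 + 1) / (((n + 2 : ℕ) : ℝ) + 1) := by
    funext n
    push_cast
    ring
  rw [hterm]
  exact h

/-- `(-log (1 - t) - t - t²/2) / t³` is monotone on `(0, 1)`, in cross-multiplied form. -/
lemma log_tail_mono {t a : ℝ} (h0 : 0 ≤ t) (hta : t ≤ a) (h1 : a < 1) :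
    a ^ 3 * (-Real.log (1 - t) - t - t ^ 2 / 2) ≤
      t ^ 3 * (-Real.log (1 - a) - a - a ^ 2 / 2) := by
  refine hasSum_le (fun n => ?_) ((hasSum_log_tail h0 (hta.trans_lt h1)).mul_left (a ^ 3))
    ((hasSum_log_tail (h0.trans hta) h1).mul_left (t ^ 3))
  have ha : 0 ≤ a := h0.trans hta
  have hpow : t ^ n ≤ a ^ n := pow_le_pow_left₀ h0 hta n
  calc a ^ 3 * (t ^ (n + 3) / ((n : ℝ) + 3)) = a ^ 3 * t ^ 3 / ((n : ℝ) + 3) * t ^ n := by ring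
    _ ≤ a ^ 3 * t ^ 3 / ((n : ℝ) + 3) * a ^ n := by gcongr
    _ = t ^ 3 * (a ^ (n + 3) / ((n : ℝ) + 3)) := by ring

/-- Let `ε ∈ (0, 1/2]`, `β₀ = 1 + ε`, and
`δ = (1+ε)³·log((1+ε)/ε) − (1+ε)² − (1+ε)/2`.
Then for every real `x ≥ −1/β₀`: `x − log(1 + x) ≤ x²/2 + δ·|x|³`. -/
theorem stmt_8 (ε : ℝ) (hε : ε ∈ Set.Ioc (0 : ℝ) (1 / 2))
    (x : ℝ) (hx : -1 / (1 + ε) ≤ x) :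
    x - Real.log (1 + x) ≤
      x ^ 2 / 2
        + ((1 + ε) ^ 3 * Real.log ((1 + ε) / ε) - (1 + ε) ^ 2 - (1 + ε) / 2)
          * |x| ^ 3 := by
  have hε0 : 0 < ε := hε.1
  have hb : 0 < 1 + ε := by linarith
  set a : ℝ := 1 / (1 + ε) with ha
  have ha0 : 0 < a := by positivity
  have ha1 : a < 1 := by rw [ha, div_lt_one hb]; linarith
  have hlog : Real.log ((1 + ε) / ε) = -Real.log (1 - a) := by
    have hsub : 1 - a = ε / (1 + ε) := by
      rw [ha]
      field_simp
      ring
    rw [← Real.log_inv, hsub, inv_div]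
  have hδ : (1 + ε) ^ 3 * Real.log ((1 + ε) / ε) - (1 + ε) ^ 2 - (1 + ε) / 2
      = (-Real.log (1 - a) - a - a ^ 2 / 2) / a ^ 3 := by
    rw [hlog, show 1 + ε = 1 / a by rw [ha]; field_simp]
    field_simp
  rw [hδ]
  rcases le_total 0 x with h | h
  · have hδ0 : 0 ≤ (-Real.log (1 - a) - a - a ^ 2 / 2) / a ^ 3 :=
      div_nonneg ((hasSum_log_tail ha0.le ha1).nonneg fun n => by positivity) (by positivity)
    have hl := Real.le_log_one_add_of_nonneg h
    have hq : x - x ^ 2 / 2 ≤ 2 * x / (x + 2) := by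
      rw [le_div_iff₀ (by linarith)]
      nlinarith [pow_nonneg h 3]
    have := mul_nonneg hδ0 (pow_nonneg (abs_nonneg x) 3)
    linarith
  · have hxa : -x ≤ a := by
      rw [neg_div] at hx
      linarith
    have hm := log_tail_mono (neg_nonneg.mpr h) hxa ha1
    rw [mul_comm (a ^ 3), ← le_div_iff₀ (by positivity), mul_div_assoc] at hm
    rw [abs_of_nonpos h]
    rw [show 1 - -x = 1 + x by ring] at hm
    linarith
end

section
/- Let T ≥ 1 be a real number, set γ = log T, and define φ(x) = x − 1 − log x + γ·(x + (1 − x)·log(1 − x)) for x ∈ (0,1], with the convention (1−1)·log(1−1) = 0 so that φ(1) = γ. Then φ(x) ≥ 0 for all x ∈ (0,1], and φ(x) ≤ log T for all x ∈ [1/T, 1]. -/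
/-!
Both bounds follow from `1 - 1 / y ≤ log y ≤ y - 1`. For nonnegativity, the barrier part
`x - 1 - log x` and the coefficient `x + (1 - x) log (1 - x)` of `log T` are each nonnegative.

For the upper bound, write `L = -log x`, so that `0 ≤ L ≤ log T` when `1 / T ≤ x ≤ 1`. The claim
is `L - (1 - x) ≤ log T * (1 - x) (1 - log (1 - x))`. Since `log (1 - x) ≤ -x`, the right side
is at least `L (1 - x ^ 2)`, and it remains to see `L x ^ 2 ≤ 1 - x`, which follows from
`L x ≤ 1 - x`.
-/

/-- Let `T ≥ 1` be real, `γ = log T`, and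
`φ(x) = x − 1 − log x + γ·(x + (1 − x)·log(1 − x))` for `x ∈ (0,1]`
(with the convention `0·log 0 = 0`, which is automatic in Lean since
`Real.log 0 = 0`).  Then `φ(x) ≥ 0` on `(0,1]` and `φ(x) ≤ log T` on
`[1/T, 1]`. -/
theorem stmt_10 (T : ℝ) (hT : 1 ≤ T) :
    (∀ x : ℝ, 0 < x → x ≤ 1 →
        0 ≤ x - 1 - Real.log x
            + Real.log T * (x + (1 - x) * Real.log (1 - x)))
    ∧ (∀ x : ℝ, 1 / T ≤ x → x ≤ 1 →
        x - 1 - Real.log x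
            + Real.log T * (x + (1 - x) * Real.log (1 - x)) ≤ Real.log T) := by
  have hγ : 0 ≤ Real.log T := Real.log_nonneg hT
  constructor
  · intro x hx hx1
    have h1 := Real.log_le_sub_one_of_pos hx
    -- The entropy term satisfies `y log y ≥ y - 1` at `y = 1 - x`, including `y = 0`.
    have h2 : 0 ≤ x + (1 - x) * Real.log (1 - x) := by
      rcases hx1.eq_or_lt with rfl | hlt
      · simp
      · have hy : 0 < 1 - x := by linarith
        have h := mul_le_mul_of_nonneg_left (Real.one_sub_inv_le_log_of_pos hy) hy.le
        rw [mul_sub, mul_inv_cancel₀ hy.ne'] at h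
        linarith
    have h3 := mul_nonneg hγ h2
    linarith
  · intro x hx hx1
    have hT0 : 0 < T := by linarith
    have hx0 : 0 < x := lt_of_lt_of_le (by positivity) hx
    rcases hx1.eq_or_lt with rfl | hlt
    · simp
    · have hy : 0 < 1 - x := by linarith
      have hL : -Real.log x ≤ Real.log T := by
        have h := Real.log_le_log (by positivity) hx
        rw [one_div, Real.log_inv] at h
        linarith
      have h0 : Real.log x ≤ 0 := Real.log_nonpos hx0.le hx1
      have h1 : Real.log (1 - x) ≤ -x := by
        have h := Real.log_le_sub_one_of_pos hy
        linarith
      have h2 : -Real.log x * x ≤ 1 - x := by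
        have h := mul_le_mul_of_nonneg_right (Real.one_sub_inv_le_log_of_pos hx0) hx0.le
        rw [sub_mul, inv_mul_cancel₀ hx0.ne'] at h
        linarith
      -- The complement of the coefficient of `log T` is at least `1 - x ^ 2`.
      have hB : 1 - x ^ 2 ≤ (1 - x) * (1 - Real.log (1 - x)) := by
        nlinarith [mul_le_mul_of_nonneg_left h1 hy.le]
      have hB0 : 0 ≤ 1 - x ^ 2 := by nlinarith
      have h3 : -Real.log x * (1 - x ^ 2)
          ≤ Real.log T * ((1 - x) * (1 - Real.log (1 - x))) :=
        mul_le_mul hL hB hB0 hγ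
      have h4 : -Real.log x * x ^ 2 ≤ 1 - x := by
        nlinarith [mul_le_mul_of_nonneg_right h2 hx0.le]
      linarith
end

section
/- Let K ≥ 1 and T ≥ K be integers with T ≥ 1, set γ = log T, and let φ(x) = x − 1 − log x + γ·(x + (1 − x)·log(1 − x)) for x ∈ (0,1] (with (1−1)log(1−1) = 0). Let β_i(t) ≥ 0 for i ∈ {1,…,K} and t ∈ {1,…,T+1} be nondecreasing in t, and define ψ_t(p) = Σ_{i=1}^K β_i(t)·φ(p_i) for p with all coordinates in (0,1]. Fix i* ∈ {1,…,K} and let p* ∈ ℝ^K have coordinates p*_{i*} = 1 − (K−1)/T and p*_i = 1/T for i ≠ i*. Then for any points q(1),…,q(T+1) in the simplex with all coordinates in (0,1]: ψ_{T+1}(p*) − ψ_1(q(1)) + Σ_{t=1}^T (ψ_t(q(t+1)) − ψ_{t+1}(q(t+1))) ≤ γ·Σ_{i=1}^K β_i(T+1). -/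
/-!
The point is that `0 ≤ φ` on `(0, 1]` and `φ ≤ log T` on `[1/T, 1]`. Nonnegativity makes `ψ 1 (q 1)`
nonnegative and, as `β` is nondecreasing, every term `ψ t (q (t+1)) - ψ (t+1) (q (t+1))`
nonpositive; what remains is `ψ (T+1) pstar`, and the coordinates of `pstar` lie in `[1/T, 1]`.
The upper bound on `φ` comes from comparing `-log` with its chord over `[1/T, 1]` and from
`log T ≤ T - 1`.
-/

open Finset

/-- Nonnegativity of the regularizer: both `x - 1 - log x` and `x + (1 - x) log (1 - x)` are
nonnegative, by `log y ≤ y - 1` and `log y ≥ 1 - 1 / y`. -/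
lemma regularizer_nonneg {c x : ℝ} (hc : 1 ≤ c) (hx0 : 0 < x) (hx1 : x ≤ 1) :
    0 ≤ x - 1 - Real.log x + Real.log c * (x + (1 - x) * Real.log (1 - x)) := by
  have h1 := Real.log_le_sub_one_of_pos hx0
  have h2 : 0 ≤ x + (1 - x) * Real.log (1 - x) := by
    rcases hx1.eq_or_lt with rfl | hlt
    · simp
    · have hy : 0 < 1 - x := by linarith
      have h3 := mul_le_mul_of_nonneg_left (Real.one_sub_inv_le_log_of_pos hy) hy.le
      rw [mul_sub, mul_inv_cancel₀ hy.ne'] at h3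
      linarith
  have h4 := mul_nonneg (Real.log_nonneg hc) h2
  linarith

/-- The graph of `log` lies above its chord over `[1/c, 1]`, cleared of denominators. -/
lemma neg_log_le_chord {c x : ℝ} (hc : 1 < c) (hx0 : 1 / c ≤ x) (hx1 : x ≤ 1) :
    (c - 1) * (-Real.log x) ≤ Real.log c * (c * (1 - x)) := by
  have hc0 : 0 < c := by linarith
  have hc1 : 0 < c - 1 := by linarith
  have hcx : 1 ≤ c * x := by
    rw [div_le_iff₀ hc0] at hx0
    linarith
  have h := strictConcaveOn_log_Ioi.concaveOn.2
    (show 1 / c ∈ Set.Ioi (0 : ℝ) from one_div_pos.mpr hc0)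
    (show (1 : ℝ) ∈ Set.Ioi (0 : ℝ) from Set.mem_Ioi.mpr one_pos)
    (show 0 ≤ c * (1 - x) / (c - 1) from
      div_nonneg (mul_nonneg hc0.le (by linarith)) hc1.le)
    (show 0 ≤ (c * x - 1) / (c - 1) from div_nonneg (by linarith) hc1.le)
    (by field_simp; ring)
  have hcomb : c * (1 - x) / (c - 1) * (1 / c) + (c * x - 1) / (c - 1) * 1 = x := by
    field_simp
    ring
  simp only [smul_eq_mul] at h
  rw [hcomb, Real.log_one, one_div, Real.log_inv] at h
  have h' := mul_le_mul_of_nonneg_left h hc1.le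
  have hclear : (c - 1) * (c * (1 - x) / (c - 1) * -Real.log c + (c * x - 1) / (c - 1) * 0)
      = -(Real.log c * (c * (1 - x))) := by
    field_simp
    ring
  rw [hclear] at h'
  linarith

lemma regularizer_le_log {c x : ℝ} (hc : 1 ≤ c) (hx0 : 1 / c ≤ x) (hx1 : x ≤ 1) :
    x - 1 - Real.log x + Real.log c * (x + (1 - x) * Real.log (1 - x)) ≤ Real.log c := by
  rcases hc.eq_or_lt with rfl | hc
  · have : x = 1 := le_antisymm hx1 (by simpa using hx0)
    simp [this]
  · have hc1 : 0 < c - 1 := by linarith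
    have hx : 0 < x := (one_div_pos.mpr (by linarith)).trans_le hx0
    have hchord := neg_log_le_chord hc hx0 hx1
    have hlog := Real.log_le_sub_one_of_pos (show 0 < c by linarith)
    -- After division by `c - 1`, the chord bound reads `-log x ≤ (1 - x) * (1 + log c)`.
    have h1 : -Real.log x ≤ (1 - x) * (1 + Real.log c) := by
      refine le_of_mul_le_mul_left ?_ hc1
      nlinarith [mul_le_mul_of_nonneg_right hlog (sub_nonneg.mpr hx1)]
    have h2 : Real.log c * ((1 - x) * Real.log (1 - x)) ≤ 0 :=
      mul_nonpos_of_nonneg_of_nonpos (Real.log_nonneg hc.le)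
        (mul_nonpos_of_nonneg_of_nonpos (by linarith)
          (Real.log_nonpos (by linarith) (by linarith)))
    linarith

/-- Penalty-term bound for the OFTRL regret decomposition with the proposed
regularizer.  Here `γ = log T`,
`φ(x) = x − 1 − log x + γ·(x + (1−x)·log(1−x))` (with `0·log 0 = 0`,
automatic in Lean), `ψ_t(p) = Σ_i β_i(t)·φ(p_i)` with nonnegative
regularization parameters `β_i(t)` nondecreasing in `t`, and the comparator
`p*` has coordinates `p*_{i*} = 1 − (K−1)/T` and `p*_i = 1/T` otherwise.
For any points `q(1),…,q(T+1)` of the simplex with all coordinates in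
`(0,1]`:
`ψ_{T+1}(p*) − ψ_1(q(1)) + Σ_{t=1}^T (ψ_t(q(t+1)) − ψ_{t+1}(q(t+1)))
  ≤ γ·Σ_i β_i(T+1)`. -/
theorem stmt_11 (K T : ℕ) (hK : 1 ≤ K) (hKT : K ≤ T)
    (β : Fin K → ℕ → ℝ)
    (hβ0 : ∀ (i : Fin K) (t : ℕ), 0 ≤ β i t)
    (hβmono : ∀ (i : Fin K) (t : ℕ), β i t ≤ β i (t + 1))
    (φ : ℝ → ℝ)
    (hφ : ∀ x : ℝ, φ x = x - 1 - Real.log x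
        + Real.log T * (x + (1 - x) * Real.log (1 - x)))
    (ψ : ℕ → (Fin K → ℝ) → ℝ)
    (hψ : ∀ (t : ℕ) (pvec : Fin K → ℝ), ψ t pvec = ∑ i, β i t * φ (pvec i))
    (istar : Fin K) (pstar : Fin K → ℝ)
    (hpstar : ∀ i : Fin K,
        pstar i = if i = istar then 1 - ((K : ℝ) - 1) / T else 1 / T)
    (q : ℕ → Fin K → ℝ)
    (hq : ∀ t ∈ Finset.Icc 1 (T + 1),
        (∀ i : Fin K, q t i ∈ Set.Ioc (0 : ℝ) 1) ∧ ∑ i, q t i = 1) :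
    ψ (T + 1) pstar - ψ 1 (q 1)
        + ∑ t ∈ Finset.Icc 1 T, (ψ t (q (t + 1)) - ψ (t + 1) (q (t + 1)))
      ≤ Real.log T * ∑ i, β i (T + 1) := by
  have hT : (1 : ℝ) ≤ T := by exact_mod_cast hK.trans hKT
  have hT0 : (0 : ℝ) < T := by linarith
  have hK' : (1 : ℝ) ≤ K := by exact_mod_cast hK
  have hKT' : (K : ℝ) ≤ T := by exact_mod_cast hKT
  have hφq : ∀ t ∈ Finset.Icc 1 (T + 1), ∀ i, 0 ≤ φ (q t i) := by
    intro t ht i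
    obtain ⟨h0, h1⟩ := (hq t ht).1 i
    rw [hφ]
    exact regularizer_nonneg hT h0 h1
  have hpmem : ∀ i, 1 / (T : ℝ) ≤ pstar i ∧ pstar i ≤ 1 := by
    intro i
    rw [hpstar]
    split_ifs
    · constructor
      · rw [le_sub_iff_add_le, ← add_div, div_le_one hT0]
        linarith
      · have : 0 ≤ ((K : ℝ) - 1) / T := div_nonneg (by linarith) hT0.le
        linarith
    · exact ⟨le_rfl, (div_le_one hT0).mpr hT⟩
  have hmain : ψ (T + 1) pstar ≤ Real.log T * ∑ i, β i (T + 1) := by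
    rw [hψ, Finset.mul_sum]
    refine Finset.sum_le_sum fun i _ => ?_
    rw [mul_comm (Real.log T), hφ]
    exact mul_le_mul_of_nonneg_left (regularizer_le_log hT (hpmem i).1 (hpmem i).2) (hβ0 i _)
  have hfirst : 0 ≤ ψ 1 (q 1) := by
    rw [hψ]
    exact Finset.sum_nonneg fun i _ =>
      mul_nonneg (hβ0 i 1) (hφq 1 (Finset.mem_Icc.mpr ⟨le_rfl, by omega⟩) i)
  have hdrift : ∑ t ∈ Finset.Icc 1 T, (ψ t (q (t + 1)) - ψ (t + 1) (q (t + 1))) ≤ 0 := by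
    refine Finset.sum_nonpos fun t ht => ?_
    rw [Finset.mem_Icc] at ht
    rw [hψ, hψ, sub_nonpos]
    exact Finset.sum_le_sum fun i _ => mul_le_mul_of_nonneg_right (hβmono i t)
      (hφq (t + 1) (Finset.mem_Icc.mpr ⟨by omega, by omega⟩) i)
  linarith
end

section
/- Let ε ∈ (0, 1/2], β₀ = 1 + ε, and δ = (1+ε)³·log((1+ε)/ε) − (1+ε)² − (1+ε)/2. Let β ≥ β₀, p ∈ (0,1], γ ≥ 3/2 + δ, and u ∈ [−1,1]. Then: (i) if γ·p ≤ 1 then u²/(2β) + δ|u|³/β² ≤ (1 − p)·u²/(γ·p²·β); and (ii) in all cases, min{ u²/(2β) + δ|u|³/β², (1 − p)·u²/(γ·p²·β) } ≤ (1/(2β) + δ/β²)·u²·min{1, 2(1 − p)/(γ·p²)}. -/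
/-!
The constant `δ` is nonnegative: with `b = 1 + ε`, `log ((1 + ε) / ε) = -log (1 - 1/b)` is at least
`1/b + 1/(2b²)`, a partial sum of its power series. Since `β ≥ 1` and `|u| ≤ 1`, part (i) then
reduces to `(1/2 + δ) γ p² ≤ 1 - p`, which follows from `γ p ≤ 1` and `(3/2 + δ) p ≤ γ p ≤ 1`.
Part (ii) splits on which argument of the right-hand minimum is smaller: `|u|³ ≤ u²` bounds the
first term of the left-hand minimum, and dropping the summand `δ / β²` bounds the second.
-/

/-- Nonnegativity of `δ`, from the first two terms of the power series of `-log (1 - x)`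
at `x = 1 / (1 + ε)`. -/
lemma delta_nonneg {ε : ℝ} (hε : 0 < ε) :
    0 ≤ (1 + ε) ^ 3 * Real.log ((1 + ε) / ε) - (1 + ε) ^ 2 - (1 + ε) / 2 := by
  have hb : 0 < 1 + ε := by linarith
  have hx0 : 0 < 1 / (1 + ε) := by positivity
  have hx1 : 1 / (1 + ε) < 1 := by rw [div_lt_one hb]; linarith
  have hs := Real.hasSum_pow_div_log_of_abs_lt_one (x := 1 / (1 + ε))
    (by rw [abs_of_pos hx0]; exact hx1)
  have h := sum_le_hasSum (Finset.range 2) (fun i _ => by positivity) hs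
  have hlog : -Real.log (1 - 1 / (1 + ε)) = Real.log ((1 + ε) / ε) := by
    have h1 : 1 - 1 / (1 + ε) = ε / (1 + ε) := by
      field_simp
      ring
    rw [h1, ← Real.log_inv, inv_div]
  rw [hlog] at h
  norm_num [Finset.sum_range_succ] at h
  have h2 := mul_le_mul_of_nonneg_left h (pow_pos hb 3).le
  have h3 : (1 + ε) ^ 3 * ((1 + ε)⁻¹ + ((1 + ε) ^ 2)⁻¹ / 2) = (1 + ε) ^ 2 + (1 + ε) / 2 := by
    field_simp
  linarith


/-- Let `ε ∈ (0, 1/2]`, `β₀ = 1 + ε`,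
`δ = (1+ε)³·log((1+ε)/ε) − (1+ε)² − (1+ε)/2`, and let `β ≥ β₀`,
`p ∈ (0,1]`, `γ ≥ 3/2 + δ`, `u ∈ [−1,1]`.  Then:
(i) if `γ·p ≤ 1` then `u²/(2β) + δ|u|³/β² ≤ (1 − p)·u²/(γ·p²·β)`; and
(ii) `min{u²/(2β) + δ|u|³/β², (1 − p)·u²/(γ·p²·β)}
      ≤ (1/(2β) + δ/β²)·u²·min{1, 2(1 − p)/(γ·p²)}`. -/
theorem stmt_12 (ε δ β p γ u : ℝ) (hε : ε ∈ Set.Ioc (0 : ℝ) (1 / 2))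
    (hδ : δ = (1 + ε) ^ 3 * Real.log ((1 + ε) / ε) - (1 + ε) ^ 2 - (1 + ε) / 2)
    (hβ : 1 + ε ≤ β) (hp : p ∈ Set.Ioc (0 : ℝ) 1) (hγ : 3 / 2 + δ ≤ γ)
    (hu : u ∈ Set.Icc (-1 : ℝ) 1) :
    (γ * p ≤ 1 →
        u ^ 2 / (2 * β) + δ * |u| ^ 3 / β ^ 2 ≤
          (1 - p) * u ^ 2 / (γ * p ^ 2 * β))
    ∧ min (u ^ 2 / (2 * β) + δ * |u| ^ 3 / β ^ 2)
          ((1 - p) * u ^ 2 / (γ * p ^ 2 * β))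
        ≤ (1 / (2 * β) + δ / β ^ 2) * u ^ 2 * min 1 (2 * (1 - p) / (γ * p ^ 2)) := by
  obtain ⟨hε0, -⟩ := hε
  obtain ⟨hp0, hp1⟩ := hp
  have hδ0 : 0 ≤ δ := hδ ▸ delta_nonneg hε0
  have hβ1 : 1 ≤ β := by linarith
  have hβ0 : 0 < β := by linarith
  have hγ0 : 0 < γ := by linarith
  have hcube : |u| ^ 3 ≤ u ^ 2 := by
    rw [← sq_abs u]
    exact pow_le_pow_of_le_one (abs_nonneg u) (abs_le.2 hu) (by norm_num)
  have hfirst : u ^ 2 / (2 * β) + δ * |u| ^ 3 / β ^ 2 ≤ (1 / (2 * β) + δ / β ^ 2) * u ^ 2 := by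
    have h : δ * |u| ^ 3 / β ^ 2 ≤ δ * u ^ 2 / β ^ 2 := by gcongr
    calc _ ≤ u ^ 2 / (2 * β) + δ * u ^ 2 / β ^ 2 := by linarith
      _ = _ := by ring
  refine ⟨fun hγp => ?_, ?_⟩
  · have hp' : p * (1 / 2 + δ) ≤ 1 - p := by nlinarith
    have hkey : 1 / 2 + δ ≤ (1 - p) / (γ * p ^ 2) := by
      rw [le_div_iff₀ (by positivity)]
      have : γ * p * (p * (1 / 2 + δ)) ≤ p * (1 / 2 + δ) :=
        mul_le_of_le_one_left (by positivity) hγp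
      nlinarith
    have hcoef : 1 / (2 * β) + δ / β ^ 2 ≤ (1 / 2 + δ) / β := by
      have : δ / β ^ 2 ≤ δ / β := by
        gcongr
        nlinarith
      calc _ ≤ 1 / (2 * β) + δ / β := by linarith
        _ = _ := by field_simp
    calc _ ≤ _ := hfirst
      _ ≤ (1 / 2 + δ) / β * u ^ 2 := by gcongr
      _ ≤ (1 - p) / (γ * p ^ 2) / β * u ^ 2 := by gcongr
      _ = _ := by field_simp
  · rcases le_total 1 (2 * (1 - p) / (γ * p ^ 2)) with h | h
    · rw [min_eq_left h, mul_one]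
      exact (min_le_left _ _).trans hfirst
    · rw [min_eq_right h]
      refine (min_le_right _ _).trans ?_
      have h1p : 0 ≤ 1 - p := by linarith
      calc (1 - p) * u ^ 2 / (γ * p ^ 2 * β)
          = 1 / (2 * β) * u ^ 2 * (2 * (1 - p) / (γ * p ^ 2)) := by field_simp
        _ ≤ _ := by
          gcongr
          exact le_add_of_nonneg_right (by positivity)
end

section
/- Let β₀ > 0, δ > 0, σ² > 0, and Δ > 0 be real numbers, and set z = σ²/Δ. Define g(x) = 4·√(β₀² + σ²·x) + 2δ·log(1 + σ²·x/β₀²) for x ≥ 0. Then for every x ≥ 0: g(x) − Δ·x ≤ 2·(z·(1 + √(1 + 2δ/z)) − δ) + 4δ·(log(z/β₀) + log(1 + √(1 + 2δ/z))) + β₀²/z. -/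
/-!
With `s = √(β₀² + σ² x)` the left side is `4 s + 4 δ log (s / β₀) - s² / z + β₀² / z`, a concave
function of `s > 0` whose critical point is `t = z (1 + √(1 + 2δ/z))`, the positive root of
`t² = 2 z t + 2 δ z`. The right side is its value at `t`. The bound follows from the tangent
inequality `log (s / t) ≤ s / t - 1` at the critical point, after which what is left is
`(s - t)² ≥ 0`.
-/

/-- Let `β₀ > 0`, `δ > 0`, `σ² > 0`, `Δ > 0`, and set `z = σ²/Δ`.  Let
`g(x) = 4·√(β₀² + σ²·x) + 2δ·log(1 + σ²·x/β₀²)`.  Then for every `x ≥ 0`: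
`g(x) − Δ·x ≤ 2·(z·(1 + √(1 + 2δ/z)) − δ)
  + 4δ·(log(z/β₀) + log(1 + √(1 + 2δ/z))) + β₀²/z`. -/
theorem stmt_18 (β₀ δ σsq Δ z : ℝ) (hβ : 0 < β₀) (hδ : 0 < δ) (hσ : 0 < σsq)
    (hΔ : 0 < Δ) (hz : z = σsq / Δ) :
    ∀ x : ℝ, 0 ≤ x →
      4 * Real.sqrt (β₀ ^ 2 + σsq * x)
          + 2 * δ * Real.log (1 + σsq * x / β₀ ^ 2) - Δ * x ≤
        2 * (z * (1 + Real.sqrt (1 + 2 * δ / z)) - δ)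
          + 4 * δ * (Real.log (z / β₀) + Real.log (1 + Real.sqrt (1 + 2 * δ / z)))
          + β₀ ^ 2 / z := by
  intro x hx
  have hz0 : 0 < z := hz ▸ div_pos hσ hΔ
  have hσz : σsq = z * Δ := by rw [hz]; field_simp
  have hpos : 0 < β₀ ^ 2 + σsq * x := by positivity
  set s := Real.sqrt (β₀ ^ 2 + σsq * x) with hs
  have hs0 : 0 < s := Real.sqrt_pos.mpr hpos
  have hs2 : s ^ 2 = β₀ ^ 2 + σsq * x := Real.sq_sqrt hpos.le
  set r := Real.sqrt (1 + 2 * δ / z) with hr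
  have hr0 : 0 ≤ r := Real.sqrt_nonneg _
  have hr2 : r ^ 2 = 1 + 2 * δ / z := Real.sq_sqrt (by positivity)
  have hlog : Real.log (1 + σsq * x / β₀ ^ 2) = 2 * (Real.log s - Real.log β₀) := by
    have h : 1 + σsq * x / β₀ ^ 2 = (s / β₀) ^ 2 := by
      rw [div_pow, hs2]; field_simp
    rw [h, Real.log_pow, Real.log_div hs0.ne' hβ.ne']; norm_num
  have hlog2 : Real.log (z / β₀) + Real.log (1 + r) = Real.log (z * (1 + r)) - Real.log β₀ := by
    rw [Real.log_div hz0.ne' hβ.ne', Real.log_mul hz0.ne' (by positivity)]; ring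
  have hΔx : Δ * x = s ^ 2 / z - β₀ ^ 2 / z := by
    rw [hs2, hσz]; field_simp; ring
  have ht0 : 0 < z * (1 + r) := by positivity
  have ht2 : (z * (1 + r)) ^ 2 = 2 * z * (z * (1 + r)) + 2 * δ * z := by
    have h : z ^ 2 * r ^ 2 = z ^ 2 + 2 * δ * z := by rw [hr2]; field_simp
    linear_combination h
  rw [hlog, hlog2, hΔx]
  generalize z * (1 + r) = t at ht0 ht2 ⊢
  have htan : Real.log s - Real.log t ≤ s / t - 1 := by
    rw [← Real.log_div hs0.ne' ht0.ne']
    exact Real.log_le_sub_one_of_pos (by positivity)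
  have hmul := mul_le_mul_of_nonneg_left htan (by positivity : 0 ≤ 4 * δ)
  -- the critical-point equation `4 + 4 δ / t = 2 t / z`, multiplied by `s`
  have hcrit : 4 * δ * (s / t) = 2 * t * s / z - 4 * s := by
    field_simp
    linear_combination (-2) * ht2
  have htz : t ^ 2 / z = 2 * t + 2 * δ := by
    rw [ht2]; field_simp
  have hsq : 0 ≤ (s - t) ^ 2 / z := by positivity
  have hexp : (s - t) ^ 2 / z = s ^ 2 / z - 2 * t * s / z + t ^ 2 / z := by ring
  linarith
end
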